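/- Let φ, Φ: S_{m−1} → S_m be defined by φ(π_1⋯π_{m−1}) = (π_1+1)(π_2+1)⋯(π_{m−1}+1)·1 and Φ(π_1⋯π_{m−1}) = π_1π_2⋯π_{m−1}·m. For every n ≥ 5, the set S_n(132;312) of permutations of {1,…,n} avoiding 132 and containing 312 exactly once equals {φ(π) : π ∈ S_{n−1}(132;312)} ∪ {Φ(π) : π ∈ S_{n−1}(132;312)}; moreover S_4(132;312) = {3124, 4231}. -/

import Mathlib

/-- Number of occurrences of the pattern `α ∈ S_k` in the permutation `π ∈ S_n`:
the number of strictly increasing choices of `k` indices such that the corresponding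
subword of `π` is order-isomorphic to `α`. -/
noncomputable def occCount {k n : ℕ} (α : Equiv.Perm (Fin k)) (π : Equiv.Perm (Fin n)) : ℕ :=
  Nat.card {f : Fin k → Fin n // StrictMono f ∧ ∀ a b : Fin k, α a < α b ↔ π (f a) < π (f b)}

/-- `π` avoids the pattern `α`. -/
def avoids {k n : ℕ} (α : Equiv.Perm (Fin k)) (π : Equiv.Perm (Fin n)) : Prop :=
  occCount α π = 0

/-- `π` contains the pattern `α` exactly once. -/
def containsOnce {k n : ℕ} (α : Equiv.Perm (Fin k)) (π : Equiv.Perm (Fin n)) : Prop :=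
  occCount α π = 1

/-- The pattern `123` (as a permutation of `Fin 3`, 0-indexed). -/
def p123 : Equiv.Perm (Fin 3) := ⟨![0,1,2], ![0,1,2], by decide, by decide⟩
/-- The pattern `132`. -/
def p132 : Equiv.Perm (Fin 3) := ⟨![0,2,1], ![0,2,1], by decide, by decide⟩
/-- The pattern `213`. -/
def p213 : Equiv.Perm (Fin 3) := ⟨![1,0,2], ![1,0,2], by decide, by decide⟩
/-- The pattern `231`. -/
def p231 : Equiv.Perm (Fin 3) := ⟨![1,2,0], ![2,0,1], by decide, by decide⟩
/-- The pattern `312`. -/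
def p312 : Equiv.Perm (Fin 3) := ⟨![2,0,1], ![1,2,0], by decide, by decide⟩
/-- The pattern `321`. -/
def p321 : Equiv.Perm (Fin 3) := ⟨![2,1,0], ![2,1,0], by decide, by decide⟩

/-- `s_n(α;β)`: the number of permutations of `{1,…,n}` that avoid `α` and contain `β`
exactly once. -/
noncomputable def sAvoidContain (α β : Equiv.Perm (Fin 3)) (n : ℕ) : ℕ :=
  Nat.card {π : Equiv.Perm (Fin n) // avoids α π ∧ containsOnce β π}

/-- `s_n(∅;{α,β})`: the number of permutations of `{1,…,n}` that contain each of `α` and `β`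
exactly once. -/
noncomputable def sContainBoth (α β : Equiv.Perm (Fin 3)) (n : ℕ) : ℕ :=
  Nat.card {π : Equiv.Perm (Fin n) // containsOnce α π ∧ containsOnce β π}

/-- `φ : S_m → S_{m+1}` appends a new smallest element at the end:
`φ(π₁…π_m) = (π₁+1)(π₂+1)⋯(π_m+1)·1`. -/
def phi {m : ℕ} (π : Equiv.Perm (Fin m)) : Equiv.Perm (Fin (m + 1)) where
  toFun i := Fin.lastCases 0 (fun j => (π j).succ) i
  invFun v := Fin.cases (Fin.last m) (fun j => (π.symm j).castSucc) v
  left_inv i := by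
    induction i using Fin.lastCases with
    | last => simp
    | cast j => simp
  right_inv v := by
    induction v using Fin.cases with
    | zero => simp
    | succ j => simp

/-- `Φ : S_m → S_{m+1}` appends a new largest element at the end:
`Φ(π₁…π_m) = π₁π₂⋯π_m·(m+1)`. -/
def Phi {m : ℕ} (π : Equiv.Perm (Fin m)) : Equiv.Perm (Fin (m + 1)) where
  toFun i := Fin.lastCases (Fin.last m) (fun j => (π j).castSucc) i
  invFun v := Fin.lastCases (Fin.last m) (fun j => (π.symm j).castSucc) v
  left_inv i := by
    induction i using Fin.lastCases with
    | last => simp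
    | cast j => simp
  right_inv v := by
    induction v using Fin.lastCases with
    | last => simp
    | cast j => simp

/-- `S_n(α;β)`: the set of permutations of `{1,…,n}` avoiding `α` and containing `β`
exactly once. -/
def SnAvoidContain (α β : Equiv.Perm (Fin 3)) (n : ℕ) : Set (Equiv.Perm (Fin n)) :=
  {π | avoids α π ∧ containsOnce β π}

/-- `S_n(∅;{α,β})`: the set of permutations of `{1,…,n}` containing each of `α` and `β`
exactly once. -/
def SnContainBoth (α β : Equiv.Perm (Fin 3)) (n : ℕ) : Set (Equiv.Perm (Fin n)) :=
  {π | containsOnce α π ∧ containsOnce β π}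

/-- `π` is the permutation whose one-line word (1-indexed positions, values in `{1,…,n}`)
is given by `w`. -/
def hasWord {n : ℕ} (π : Equiv.Perm (Fin n)) (w : ℕ → ℕ) : Prop :=
  ∀ j : Fin n, (π j : ℕ) + 1 = w ((j : ℕ) + 1)

/-- The permutation with one-line word `3124`. -/
def w3124 : Equiv.Perm (Fin 4) := ⟨![2,0,1,3], ![1,2,0,3], by decide, by decide⟩
/-- The permutation with one-line word `4231`. -/
def w4231 : Equiv.Perm (Fin 4) := ⟨![3,1,2,0], ![3,1,2,0], by decide, by decide⟩

/-!
Let `v` be the last letter of a `132`-avoiding word. Every letter above `v` must precede every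
letter below `v`, since otherwise the two would form a `132` with `v`; hence each pair
(letter above `v`, letter below `v`) forms a `312` with `v`. With letters `0, …, m` there are
`v * (m - v)` such pairs, so a single `312` forces `v` to be extremal as soon as `m ≥ 3`, and the
word is then in the image of `φ` or of `Φ`. Conversely an extremal last letter takes part in no
`132` and no `312`, so appending one changes neither count.
-/

open Equiv Fin

/-- The choice of positions `f` is an occurrence of the pattern `α` in `π`; these are the objects
counted by `occCount α π`. -/
def IsOccurrence {k n : ℕ} (α : Perm (Fin k)) (π : Perm (Fin n)) (f : Fin k → Fin n) : Prop :=
  StrictMono f ∧ ∀ a b : Fin k, α a < α b ↔ π (f a) < π (f b)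

section Occurrences

variable {k n m : ℕ}

theorem isOccurrence_iff_strictMono {α : Perm (Fin k)} {π : Perm (Fin n)} {f : Fin k → Fin n} :
    IsOccurrence α π f ↔ StrictMono f ∧ StrictMono (π ∘ f ∘ α.symm) := by
  refine and_congr_right fun _ => ⟨fun h a b hab => ?_, fun h a b => ?_⟩
  · exact (h _ _).1 (by simpa only [apply_symm_apply] using hab)
  · simpa only [Function.comp_apply, symm_apply_apply] using
      (h.lt_iff_lt (a := α a) (b := α b)).symm

theorem occCount_eq_card (α : Perm (Fin k)) (π : Perm (Fin n)) :
    occCount α π = Nat.card {f // IsOccurrence α π f} :=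
  rfl

theorem avoids_iff_forall_not_isOccurrence {α : Perm (Fin k)} {π : Perm (Fin n)} :
    avoids α π ↔ ∀ f, ¬ IsOccurrence α π f := by
  rw [avoids, occCount_eq_card, Finite.card_eq_zero_iff, isEmpty_subtype]

theorem IsOccurrence.apply_eq_zero {α : Perm (Fin (k + 1))} {π : Perm (Fin (n + 1))}
    {f : Fin (k + 1) → Fin (n + 1)} (h : IsOccurrence α π f) {i : Fin (k + 1)}
    (hi : π (f i) = 0) : α i = 0 := by
  by_contra hne
  have hlt : α (α.symm 0) < α i := by rwa [apply_symm_apply, Fin.pos_iff_ne_zero]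
  exact Fin.not_lt_zero _ (hi ▸ (h.2 _ _).1 hlt)

theorem IsOccurrence.apply_eq_last {α : Perm (Fin (k + 1))} {π : Perm (Fin (n + 1))}
    {f : Fin (k + 1) → Fin (n + 1)} (h : IsOccurrence α π f) {i : Fin (k + 1)}
    (hi : π (f i) = last n) : α i = last k := by
  by_contra hne
  have hlt : α i < α (α.symm (last k)) := by rwa [apply_symm_apply, Fin.lt_last_iff_ne_last]
  exact (Fin.le_last _).not_gt (hi ▸ (h.2 _ _).1 hlt)

theorem occCount_eq_of_forall_apply_last_ne {α : Perm (Fin (k + 1))} {π : Perm (Fin m)}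
    {σ : Perm (Fin (m + 1))} (hσ : ∀ i j, σ (castSucc i) < σ (castSucc j) ↔ π i < π j)
    (hlast : ∀ f, IsOccurrence α σ f → f (last k) ≠ last m) :
    occCount α σ = occCount α π := by
  have extend {g : Fin (k + 1) → Fin m} :
      IsOccurrence α σ (castSucc ∘ g) ↔ IsOccurrence α π g := by
    simp only [IsOccurrence, StrictMono, Function.comp_apply, hσ, castSucc_lt_castSucc_iff]
  symm
  refine Nat.card_eq_of_bijective
    (fun g : {g // IsOccurrence α π g} =>
      (⟨castSucc ∘ g.1, extend.2 g.2⟩ : {f // IsOccurrence α σ f}))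
    ⟨fun g g' h => ?_, fun ⟨f, hf⟩ => ?_⟩
  · exact Subtype.ext ((castSucc_injective m).comp_left (congrArg Subtype.val h))
  · have hne (i : Fin (k + 1)) : f i ≠ last m := fun hi =>
      hlast f hf (last_le_iff.1 (hi ▸ hf.1.monotone (le_last i)))
    have hcomp : castSucc ∘ (fun i => (f i).castPred (hne i)) = f :=
      funext fun i => castSucc_castPred (f i) (hne i)
    exact ⟨⟨_, extend.1 (hcomp.symm ▸ hf)⟩, Subtype.ext hcomp⟩

end Occurrences

section SameLength

variable {n : ℕ}

theorem isOccurrence_iff_eq_id_and_eq {α π : Perm (Fin n)} {f : Fin n → Fin n} :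
    IsOccurrence α π f ↔ f = id ∧ π = α := by
  rw [isOccurrence_iff_strictMono]
  constructor
  · rintro ⟨hf, hπ⟩
    obtain rfl := hf.eq_id
    refine ⟨rfl, Equiv.ext fun a => ?_⟩
    simpa using congrFun hπ.eq_id (α a)
  · rintro ⟨rfl, rfl⟩
    exact ⟨strictMono_id, by simpa using strictMono_id⟩

theorem occCount_of_same_length (α π : Perm (Fin n)) :
    occCount α π = if π = α then 1 else 0 := by
  simp only [occCount_eq_card, isOccurrence_iff_eq_id_and_eq]
  split_ifs with h <;> simp [h]

theorem snAvoidContain_three {α β : Perm (Fin 3)} (h : α ≠ β) : SnAvoidContain α β 3 = {β} := by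
  ext π
  simp only [SnAvoidContain, avoids, containsOnce, occCount_of_same_length, Set.mem_ofPred_eq,
    Set.mem_singleton_iff]
  grind

end SameLength

section AppendExtremal

variable {k m : ℕ}

@[simp]
theorem phi_castSucc (π : Perm (Fin m)) (i : Fin m) : phi π (castSucc i) = (π i).succ := by
  simp [phi]

@[simp]
theorem phi_last (π : Perm (Fin m)) : phi π (last m) = 0 := by
  simp [phi]

@[simp]
theorem Phi_castSucc (π : Perm (Fin m)) (i : Fin m) : Phi π (castSucc i) = (π i).castSucc := by
  simp [Phi]

@[simp]
theorem Phi_last (π : Perm (Fin m)) : Phi π (last m) = last m := by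
  simp [Phi]

theorem exists_succAbove_eq_apply_castSucc (σ : Perm (Fin (m + 1))) :
    ∃ π : Perm (Fin m), ∀ i, (σ (last m)).succAbove (π i) = σ (castSucc i) := by
  have hne (i : Fin m) : σ (castSucc i) ≠ σ (last m) := σ.injective.ne (castSucc_ne_last i)
  choose π hπ using fun i => exists_succAbove_eq (hne i)
  have hinj : Function.Injective π := fun i j hij =>
    castSucc_injective m (σ.injective (by rw [← hπ, ← hπ, hij]))
  exact ⟨.ofBijective π (Finite.injective_iff_bijective.1 hinj), hπ⟩

theorem mem_range_phi_iff {σ : Perm (Fin (m + 1))} : σ ∈ Set.range phi ↔ σ (last m) = 0 := by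
  refine ⟨by rintro ⟨π, rfl⟩; exact phi_last π, fun h => ?_⟩
  obtain ⟨π, hπ⟩ := exists_succAbove_eq_apply_castSucc σ
  refine ⟨π, Equiv.ext (lastCases (by rw [phi_last, h]) fun i => ?_)⟩
  rw [phi_castSucc, ← hπ, h, succAbove_zero]

theorem mem_range_Phi_iff {σ : Perm (Fin (m + 1))} :
    σ ∈ Set.range Phi ↔ σ (last m) = last m := by
  refine ⟨by rintro ⟨π, rfl⟩; exact Phi_last π, fun h => ?_⟩
  obtain ⟨π, hπ⟩ := exists_succAbove_eq_apply_castSucc σ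
  refine ⟨π, Equiv.ext (lastCases (by rw [Phi_last, h]) fun i => ?_)⟩
  rw [Phi_castSucc, ← hπ, h, succAbove_last]

theorem occCount_phi {α : Perm (Fin (k + 1))} (hα : α (last k) ≠ 0) (π : Perm (Fin m)) :
    occCount α (phi π) = occCount α π :=
  occCount_eq_of_forall_apply_last_ne (fun i j => by simp) fun _ hf hlast =>
    hα (hf.apply_eq_zero (hlast ▸ phi_last π))

theorem occCount_Phi {α : Perm (Fin (k + 1))} (hα : α (last k) ≠ last k) (π : Perm (Fin m)) :
    occCount α (Phi π) = occCount α π :=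
  occCount_eq_of_forall_apply_last_ne (fun i j => by simp) fun _ hf hlast =>
    hα (hf.apply_eq_last (hlast ▸ Phi_last π))

variable {α β : Perm (Fin 3)}

theorem image_phi_snAvoidContain (hα : α 2 ≠ 0) (hβ : β 2 ≠ 0) :
    phi '' SnAvoidContain α β m = SnAvoidContain α β (m + 1) ∩ Set.range phi := by
  rw [← Set.image_preimage_eq_inter_range]
  congr 1
  ext π
  simp only [SnAvoidContain, avoids, containsOnce, Set.mem_preimage, Set.mem_ofPred_eq,
    occCount_phi (k := 2) hα, occCount_phi (k := 2) hβ]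

theorem image_Phi_snAvoidContain (hα : α 2 ≠ 2) (hβ : β 2 ≠ 2) :
    Phi '' SnAvoidContain α β m = SnAvoidContain α β (m + 1) ∩ Set.range Phi := by
  rw [← Set.image_preimage_eq_inter_range]
  congr 1
  ext π
  simp only [SnAvoidContain, avoids, containsOnce, Set.mem_preimage, Set.mem_ofPred_eq,
    occCount_Phi (k := 2) hα, occCount_Phi (k := 2) hβ]

end AppendExtremal

section LastLetter

variable {n m : ℕ}

theorem isOccurrence_p132_iff {π : Perm (Fin n)} {i j l : Fin n} :
    IsOccurrence p132 π ![i, j, l] ↔ (i < j ∧ j < l) ∧ π i < π l ∧ π l < π j := by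
  simp [isOccurrence_iff_strictMono, strictMono_iff_lt_succ, forall_fin_two, p132]

theorem isOccurrence_p312_iff {π : Perm (Fin n)} {i j l : Fin n} :
    IsOccurrence p312 π ![i, j, l] ↔ (i < j ∧ j < l) ∧ π j < π l ∧ π l < π i := by
  simp [isOccurrence_iff_strictMono, strictMono_iff_lt_succ, forall_fin_two, p312]

theorem isOccurrence_p312_of_avoids_p132 {π : Perm (Fin n)} (h : avoids p132 π) {i j l : Fin n}
    (hil : i < l) (hjl : j < l) (hj : π j < π l) (hi : π l < π i) :
    IsOccurrence p312 π ![i, j, l] := by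
  have hij : i < j := by
    refine lt_of_le_of_ne (not_lt.1 fun hji => ?_) (ne_of_apply_ne π (hj.trans hi).ne')
    exact avoids_iff_forall_not_isOccurrence.1 h _ (isOccurrence_p132_iff.2 ⟨⟨hji, hil⟩, hj, hi⟩)
  exact isOccurrence_p312_iff.2 ⟨⟨hij, hjl⟩, hj, hi⟩

theorem apply_last_mul_le_occCount_p312 {σ : Perm (Fin (m + 1))} (h : avoids p132 σ) :
    (σ (last m) : ℕ) * (m - σ (last m)) ≤ occCount p312 σ := by
  have symm_lt_last {v : Fin (m + 1)} (hv : v ≠ σ (last m)) : σ.symm v < last m :=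
    lt_last_iff_ne_last.2 (by rwa [Ne, symm_apply_eq])
  let occ (p : Set.Iio (σ (last m)) × Set.Ioi (σ (last m))) : {f // IsOccurrence p312 σ f} :=
    ⟨![σ.symm p.2, σ.symm p.1, last m], isOccurrence_p312_of_avoids_p132 h
      (symm_lt_last p.2.2.ne') (symm_lt_last p.1.2.ne)
      (by rw [apply_symm_apply]; exact p.1.2) (by rw [apply_symm_apply]; exact p.2.2)⟩
  have occ_injective : Function.Injective occ := fun p q hpq => by
    have hval := congrArg Subtype.val hpq
    exact Prod.ext (Subtype.ext (σ.symm.injective (congrFun hval 1)))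
      (Subtype.ext (σ.symm.injective (congrFun hval 0)))
  simpa [occCount_eq_card] using Nat.card_le_card_of_injective occ occ_injective

theorem apply_last_eq_zero_or_eq_last (hm : 3 ≤ m) {σ : Perm (Fin (m + 1))}
    (hσ : σ ∈ SnAvoidContain p132 p312 (m + 1)) : σ (last m) = 0 ∨ σ (last m) = last m := by
  have hmul : (σ (last m) : ℕ) * (m - σ (last m)) ≤ 1 :=
    (apply_last_mul_le_occCount_p312 hσ.1).trans_eq hσ.2
  rcases Nat.le_one_iff_eq_zero_or_eq_one.1 hmul with h0 | h1
  · rw [Fin.ext_iff, Fin.ext_iff, val_last, val_zero]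
    rcases Nat.mul_eq_zero.1 h0 with h | h <;> lia
  · obtain ⟨hbelow, habove⟩ := mul_eq_one.1 h1
    lia

end LastLetter

theorem snAvoidContain_p132_p312_succ {m : ℕ} (hm : 3 ≤ m) :
    SnAvoidContain p132 p312 (m + 1) =
      phi '' SnAvoidContain p132 p312 m ∪ Phi '' SnAvoidContain p132 p312 m := by
  rw [image_phi_snAvoidContain (by decide) (by decide),
    image_Phi_snAvoidContain (by decide) (by decide), ← Set.inter_union_distrib_left, eq_comm,
    Set.inter_eq_left]
  exact fun σ hσ => (apply_last_eq_zero_or_eq_last hm hσ).imp mem_range_phi_iff.2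
    mem_range_Phi_iff.2

/-- Generating rule for `S_n(132;312)`, `n = m+1 ≥ 5`:
`S_n(132;312) = φ(S_{n−1}(132;312)) ∪ Φ(S_{n−1}(132;312))`;
moreover `S_4(132;312) = {3124, 4231}`. -/
theorem generating_rule_132_312 :
    (∀ m : ℕ, 5 ≤ m + 1 →
      SnAvoidContain p132 p312 (m + 1) =
        phi '' SnAvoidContain p132 p312 m ∪ Phi '' SnAvoidContain p132 p312 m) ∧
    SnAvoidContain p132 p312 4 = {w3124, w4231} := by
  refine ⟨fun m hm => snAvoidContain_p132_p312_succ (by lia), ?_⟩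
  have phi_p312 : phi p312 = w4231 := by decide
  have Phi_p312 : Phi p312 = w3124 := by decide
  rw [snAvoidContain_p132_p312_succ le_rfl, snAvoidContain_three (by decide), Set.image_singleton,
    Set.image_singleton, phi_p312, Phi_p312, Set.union_comm, Set.singleton_union]
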